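/- Let L be a finite set of leaves with indicators I_ℓ forming a partition of the finite input space 𝒳 (the new tree to be added), and let F : 𝒳 → ℝ be a fixed forest F(x) = Σ_{j∈K} θ^F_j I^F_j(x) with finite leaf index set K, {0,1}-valued indicators I^F_j, and fixed parameters θ^F_j. Let a training set of N ≥ 1 samples be given, where sample d has label y_d ∈ ℝ and conditional distribution μ_d on 𝒳 (a probability mass function), and assume Σ_{d=1}^{N} q_d(ℓ) > 0 for every ℓ ∈ L, where q_d(ℓ) := Σ_{x∈𝒳} μ_d(x) I_ℓ(x). Define θ*_ℓ = (Σ_{d=1}^{N} [ y_d q_d(ℓ) − Σ_{j∈K} θ^F_j r_d(ℓ,j) ]) / (Σ_{d=1}^{N} q_d(ℓ)), where r_d(ℓ,j) := Σ_{x∈𝒳} μ_d(x) I_ℓ(x) I^F_j(x). Then Θ* = (θ*_ℓ)_{ℓ∈L} minimizes the boosted expected MSE loss: for every Θ ∈ ℝ^L, ℒ_Boost(Θ*) ≤ ℒ_Boost(Θ), where ℒ_Boost(Θ) = (1/N) Σ_{d=1}^{N} Σ_{x∈𝒳} μ_d(x) (y_d − F(x) − Σ_{ℓ∈L} θ_ℓ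 I_ℓ(x))². -/

import Mathlib

open Finset

/-!
On the cell of a partition indexed by `ℓ` a tree predicts the constant `θ ℓ`, so a weighted squared
loss splits into one independent problem per leaf: approximate the target on that cell by a
constant. The parallel axis identity shows that the weighted mean of the target solves it. For
boosting, the data points are the pairs `(d, x)`, with weight `μ d x` and target `y d - F x`, and
the stated parameters are the resulting weighted means.
-/

section Indicator

variable {L R : Type*} [Fintype L] [NonAssocSemiring R]

theorem exists_eq_pi_single_of_sum_eq_one [CharZero R] [DecidableEq L] {a : L → R}
    (ha : ∀ ℓ, a ℓ = 0 ∨ a ℓ = 1) (hsum : ∑ ℓ, a ℓ = 1) : ∃ ℓ₀, a = Pi.single ℓ₀ 1 := by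
  classical
  have ha_ite (ℓ : L) : a ℓ = if a ℓ = 1 then 1 else 0 := by
    rcases ha ℓ with h | h <;> simp [h]
  have hcard : #{ℓ | a ℓ = 1} = 1 := by
    rw [sum_congr rfl fun ℓ _ ↦ ha_ite ℓ, sum_boole] at hsum
    exact_mod_cast hsum
  obtain ⟨ℓ₀, hℓ₀⟩ := card_eq_one.mp hcard
  have ha_iff (ℓ : L) : a ℓ = 1 ↔ ℓ = ℓ₀ := by
    simpa using Finset.ext_iff.mp hℓ₀ ℓ
  refine ⟨ℓ₀, funext fun ℓ ↦ ?_⟩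
  rw [ha_ite, Pi.single_apply]
  simp only [ha_iff]

theorem apply_sum_mul_eq_sum_mul_apply [CharZero R] {a : L → R}
    (ha : ∀ ℓ, a ℓ = 0 ∨ a ℓ = 1) (hsum : ∑ ℓ, a ℓ = 1) (g : R → R) (θ : L → R) :
    g (∑ ℓ, θ ℓ * a ℓ) = ∑ ℓ, a ℓ * g (θ ℓ) := by
  classical
  obtain ⟨ℓ₀, rfl⟩ := exists_eq_pi_single_of_sum_eq_one ha hsum
  simp [Pi.single_apply]

end Indicator

section WeightedMean

variable {ι R : Type*} [CommRing R] {s : Finset ι} {w t : ι → R} {m : R}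

theorem sum_mul_sq_sub_eq_add_of_weighted_mean
    (hm : m * ∑ i ∈ s, w i = ∑ i ∈ s, w i * t i) (c : R) :
    ∑ i ∈ s, w i * (t i - c) ^ 2 =
      ∑ i ∈ s, w i * (t i - m) ^ 2 + (∑ i ∈ s, w i) * (m - c) ^ 2 := by
  have hcross : ∑ i ∈ s, w i * (t i - m) = 0 := by
    simp only [mul_sub, sum_sub_distrib, ← sum_mul]
    rw [← hm]
    ring
  calc ∑ i ∈ s, w i * (t i - c) ^ 2
      = ∑ i ∈ s, (w i * (t i - m) ^ 2 + w i * (t i - m) * (2 * (m - c)) + w i * (m - c) ^ 2) :=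
        sum_congr rfl fun i _ ↦ by ring
    _ = ∑ i ∈ s, w i * (t i - m) ^ 2 + (∑ i ∈ s, w i) * (m - c) ^ 2 := by
        simp only [sum_add_distrib, ← sum_mul, hcross, zero_mul, add_zero]

theorem sum_mul_sq_sub_weighted_mean_le [LinearOrder R] [IsStrictOrderedRing R]
    (hw : ∀ i ∈ s, 0 ≤ w i) (hm : m * ∑ i ∈ s, w i = ∑ i ∈ s, w i * t i) (c : R) :
    ∑ i ∈ s, w i * (t i - m) ^ 2 ≤ ∑ i ∈ s, w i * (t i - c) ^ 2 := by
  rw [sum_mul_sq_sub_eq_add_of_weighted_mean hm c]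
  exact le_add_of_nonneg_right (mul_nonneg (sum_nonneg hw) (sq_nonneg _))

end WeightedMean

section Tree

variable {ι L R : Type*} [Fintype L] [CommRing R] {s : Finset ι} {I : L → ι → R}

theorem sum_mul_sq_sub_tree_eq_sum_leaf [CharZero R]
    (hI : ∀ ℓ, ∀ i ∈ s, I ℓ i = 0 ∨ I ℓ i = 1) (hpart : ∀ i ∈ s, ∑ ℓ, I ℓ i = 1)
    (w t : ι → R) (θ : L → R) :
    ∑ i ∈ s, w i * (t i - ∑ ℓ, θ ℓ * I ℓ i) ^ 2 =
      ∑ ℓ, ∑ i ∈ s, w i * I ℓ i * (t i - θ ℓ) ^ 2 := by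
  rw [sum_comm]
  refine sum_congr rfl fun i hi ↦ ?_
  rw [apply_sum_mul_eq_sum_mul_apply (fun ℓ ↦ hI ℓ i hi) (hpart i hi) (fun v ↦ (t i - v) ^ 2),
    mul_sum]
  simp only [mul_assoc]

theorem sum_mul_sq_sub_tree_le_of_leaf_means [LinearOrder R] [IsStrictOrderedRing R]
    (hI : ∀ ℓ, ∀ i ∈ s, I ℓ i = 0 ∨ I ℓ i = 1) (hpart : ∀ i ∈ s, ∑ ℓ, I ℓ i = 1)
    {w t : ι → R} (hw : ∀ i ∈ s, 0 ≤ w i) {m : L → R}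
    (hm : ∀ ℓ, m ℓ * ∑ i ∈ s, w i * I ℓ i = ∑ i ∈ s, w i * I ℓ i * t i) (θ : L → R) :
    ∑ i ∈ s, w i * (t i - ∑ ℓ, m ℓ * I ℓ i) ^ 2 ≤
      ∑ i ∈ s, w i * (t i - ∑ ℓ, θ ℓ * I ℓ i) ^ 2 := by
  simp only [sum_mul_sq_sub_tree_eq_sum_leaf hI hpart]
  refine sum_le_sum fun ℓ _ ↦ sum_mul_sq_sub_weighted_mean_le (fun i hi ↦ ?_) (hm ℓ) (θ ℓ)
  have hI_nonneg : 0 ≤ I ℓ i := by rcases hI ℓ i hi with h | h <;> simp [h]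
  exact mul_nonneg (hw i hi) hI_nonneg

end Tree

theorem sum_mul_const_sub_linear_combination {X K R : Type*} [CommRing R] (s : Finset X)
    (k : Finset K) (v : X → R) (y : R) (θ : K → R) (f : K → X → R) :
    ∑ x ∈ s, v x * (y - ∑ j ∈ k, θ j * f j x) =
      y * ∑ x ∈ s, v x - ∑ j ∈ k, θ j * ∑ x ∈ s, v x * f j x := by
  simp only [mul_sub, sum_sub_distrib, mul_sum]
  rw [sum_comm (s := k)]
  simp only [mul_comm, mul_left_comm]

theorem expected_parameters_boosted_mse_general
    {D X L K R : Type*} [Fintype D] [Fintype X] [Fintype L] [Fintype K]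
    [Field R] [LinearOrder R] [IsStrictOrderedRing R]
    (I : L → X → R)
    (hI : ∀ ℓ x, I ℓ x = 0 ∨ I ℓ x = 1)
    (hpart : ∀ x, ∑ ℓ, I ℓ x = 1)
    (f : K → X → R) (θF : K → R)
    (y : D → R) (μ : D → X → R)
    (hμ : ∀ d x, 0 ≤ μ d x)
    (hmass : ∀ ℓ : L, 0 < ∑ d, ∑ x, μ d x * I ℓ x)
    (Θstar : L → R)
    (hΘstar : ∀ ℓ : L,
      Θstar ℓ = (∑ d, (y d * (∑ x, μ d x * I ℓ x)
                  - ∑ j, θF j * (∑ x, μ d x * I ℓ x * f j x)))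
                / (∑ d, ∑ x, μ d x * I ℓ x))
    (Θ : L → R) :
    ∑ d, ∑ x, μ d x * (y d - (∑ j, θF j * f j x) - ∑ ℓ, Θstar ℓ * I ℓ x) ^ 2
      ≤ ∑ d, ∑ x, μ d x * (y d - (∑ j, θF j * f j x) - ∑ ℓ, Θ ℓ * I ℓ x) ^ 2 := by
  have hmean (ℓ : L) : Θstar ℓ * ∑ d, ∑ x, μ d x * I ℓ x =
      ∑ d, ∑ x, μ d x * I ℓ x * (y d - ∑ j, θF j * f j x) := by
    simp only [sum_mul_const_sub_linear_combination]
    exact (eq_div_iff (hmass ℓ).ne').mp (hΘstar ℓ)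
  simp only [← Fintype.sum_prod_type'] at hmean ⊢
  exact sum_mul_sq_sub_tree_le_of_leaf_means (fun ℓ p _ ↦ hI ℓ p.2) (fun p _ ↦ hpart p.2)
    (fun p _ ↦ hμ p.1 p.2) hmean Θ

/-- **Expected parameters of boosted MSE loss (Proposition).**
Given a fixed forest F(x) = Σ_{j∈K} θF_j IF_j(x) and a new tree structure with indicators
I_ℓ partitioning the input space, assuming every leaf has positive total mass, the
parameters θ*_ℓ = (Σ_d [y_d q_d(ℓ) − Σ_j θF_j r_d(ℓ,j)]) / (Σ_d q_d(ℓ)) minimize the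
boosted expected MSE loss ℒ_Boost(Θ) = (1/N) Σ_d E_{x∼μ_d}[(y_d − F(x) − f_Θ(x))²]. -/
theorem expected_parameters_boosted_mse
    {X L K : Type*} [Fintype X] [Fintype L] [Fintype K]
    (I : L → X → ℝ)
    (hI : ∀ ℓ x, I ℓ x = 0 ∨ I ℓ x = 1)
    (hpart : ∀ x, ∑ ℓ, I ℓ x = 1)
    (IF : K → X → ℝ) (θF : K → ℝ)
    (hIF : ∀ j x, IF j x = 0 ∨ IF j x = 1)
    (N : ℕ) (hN : 1 ≤ N)
    (y : Fin N → ℝ) (μ : Fin N → X → ℝ)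
    (hμ : ∀ d x, 0 ≤ μ d x)
    (hμ1 : ∀ d, ∑ x, μ d x = 1)
    (hmass : ∀ ℓ : L, 0 < ∑ d, ∑ x, μ d x * I ℓ x)
    (Θstar : L → ℝ)
    (hΘstar : ∀ ℓ : L,
      Θstar ℓ = (∑ d, (y d * (∑ x, μ d x * I ℓ x)
                  - ∑ j, θF j * (∑ x, μ d x * I ℓ x * IF j x)))
                / (∑ d, ∑ x, μ d x * I ℓ x)) :
    ∀ Θ : L → ℝ,
      (1 / (N : ℝ)) * ∑ d, ∑ x,
          μ d x * (y d - (∑ j, θF j * IF j x) - ∑ ℓ, Θstar ℓ * I ℓ x) ^ 2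
        ≤ (1 / (N : ℝ)) * ∑ d, ∑ x,
          μ d x * (y d - (∑ j, θF j * IF j x) - ∑ ℓ, Θ ℓ * I ℓ x) ^ 2 := by
  intro Θ
  exact mul_le_mul_of_nonneg_left (expected_parameters_boosted_mse_general I hI hpart IF θF y μ hμ
    hmass Θstar hΘstar Θ) (by positivity)
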